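/- Let B be a supersoluble brace such that U_2^+(B) = {0}, i.e. (B,+) has no nonzero element of finite odd order. Then B/Fit(B) is finite of order a power of 2. -/

import Mathlib

/-- A (skew left) brace: a set with an additive group structure (not necessarily abelian)
and a multiplicative group structure sharing the same identity, satisfying the skew
distributive law `a * (b + c) = a * b + -a + a * c`. -/
class SkewBrace (B : Type*) extends AddGroup B, Group B where
  one_eq_zero : (1 : B) = (0 : B)
  skew_distrib : ∀ a b c : B, a * (b + c) = a * b + -a + a * c

/-- A group is supersoluble if it has a finite chain of normal subgroups with all
factors cyclic. -/
def Group.IsSupersoluble (G : Type*) [Group G] : Prop :=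
  ∃ (n : ℕ) (H : ℕ → Subgroup G),
    H 0 = ⊥ ∧ H n = ⊤ ∧ (∀ i, (H i).Normal) ∧ (∀ i, i < n → H i ≤ H (i + 1)) ∧
    ∀ i, i < n → ∃ x ∈ H (i + 1), ∀ y ∈ H (i + 1), ∃ k : ℤ, (x ^ k)⁻¹ * y ∈ H i

namespace SkewBrace

variable {B : Type*} [SkewBrace B]

/-- `lam a b = -a + a * b`, i.e. `λ_a(b)`. -/
def lam (a b : B) : B := -a + a * b

/-- the star operation `a ∗ b = λ_a(b) - b`. -/
def starOp (a b : B) : B := lam a b + -b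

/-- the additive commutator `[a,b]_+`. -/
def addCommutator (a b : B) : B := -a + -b + a + b

/-- A subbrace of `B`: a subset that is a subgroup of both `(B,+)` and `(B,·)`. -/
structure Subbrace (B : Type*) [SkewBrace B] where
  carrier : Set B
  zero_mem : (0 : B) ∈ carrier
  add_mem : ∀ {a b : B}, a ∈ carrier → b ∈ carrier → a + b ∈ carrier
  neg_mem : ∀ {a : B}, a ∈ carrier → -a ∈ carrier
  mul_mem : ∀ {a b : B}, a ∈ carrier → b ∈ carrier → a * b ∈ carrier
  inv_mem : ∀ {a : B}, a ∈ carrier → a⁻¹ ∈ carrier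

/-- An ideal of `B`: a subbrace that is normal in `(B,+)` and in `(B,·)` and is
invariant under all the maps `λ_b`. -/
structure BraceIdeal (B : Type*) [SkewBrace B] extends Subbrace B where
  addConj_mem : ∀ (b : B) {a : B}, a ∈ carrier → b + a + -b ∈ carrier
  mulConj_mem : ∀ (b : B) {a : B}, a ∈ carrier → b * a * b⁻¹ ∈ carrier
  lam_mem : ∀ (b : B) {a : B}, a ∈ carrier → lam b a ∈ carrier

/-- The additive subgroup underlying a subbrace. -/
def Subbrace.addSubgroup (S : Subbrace B) : AddSubgroup B where
  carrier := S.carrier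
  zero_mem' := S.zero_mem
  add_mem' := S.add_mem
  neg_mem' := S.neg_mem

/-- The multiplicative subgroup underlying a subbrace. -/
def Subbrace.subgroup (S : Subbrace B) : Subgroup B where
  carrier := S.carrier
  one_mem' := by rw [one_eq_zero]; exact S.zero_mem
  mul_mem' := S.mul_mem
  inv_mem' := S.inv_mem

/-- Given ideals `J ≤ I` of `B`, `MemSocQuotRel I J x` says that the coset of `x`
lies in `Soc(I/J) = Ker(λ) ∩ Z(I/J, +)` (for `I = B` take `I = Set.univ`). -/
def MemSocQuotRel (I J : Set B) (x : B) : Prop :=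
  x ∈ I ∧ (∀ y ∈ I, -y + lam x y ∈ J) ∧ ∀ y ∈ I, -(y + x) + (x + y) ∈ J

/-- Given ideals `J ≤ I` of `B`, `MemZetaQuotRel I J x` says that the coset of `x`
lies in `ζ(I/J) = Soc(I/J) ∩ Z(I/J, ·)`. -/
def MemZetaQuotRel (I J : Set B) (x : B) : Prop :=
  MemSocQuotRel I J x ∧ ∀ y ∈ I, (y * x)⁻¹ * (x * y) ∈ J

/-- The coset of `x` lies in `Soc(B/J)`. -/
def MemSocQuot (J : Set B) (x : B) : Prop := MemSocQuotRel Set.univ J x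

/-- The coset of `x` lies in `ζ(B/J)`. -/
def MemZetaQuot (J : Set B) (x : B) : Prop := MemZetaQuotRel Set.univ J x

/-- For ideals `I ≤ J`, the additive group of the quotient `J/I` is infinite cyclic. -/
def QuotAddInfCyclic (I J : Set B) : Prop :=
  ∃ x ∈ J, (∀ y ∈ J, ∃ n : ℤ, -(n • x) + y ∈ I) ∧ ∀ n : ℤ, n • x ∈ I → n = 0

/-- For ideals `I ≤ J`, the quotient `J/I` has prime order `p`. -/
def QuotPrimeOrder (I J : Set B) (p : ℕ) : Prop :=
  p.Prime ∧ ∃ x ∈ J, x ∉ I ∧ p • x ∈ I ∧ ∀ y ∈ J, ∃ n : ℤ, -(n • x) + y ∈ I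

/-- A brace is supersoluble if it has a finite chain of ideals each factor of which
either is additively infinite cyclic and contained in the socle of the corresponding
quotient, or has prime order. -/
def IsSupersoluble (B : Type*) [SkewBrace B] : Prop :=
  ∃ (n : ℕ) (I : ℕ → BraceIdeal B),
    (I 0).carrier = {0} ∧ (I n).carrier = Set.univ ∧
    (∀ i, i < n → (I i).carrier ⊆ (I (i + 1)).carrier) ∧
    ∀ i, i < n →
      (QuotAddInfCyclic (I i).carrier (I (i + 1)).carrier ∧
        ∀ x ∈ (I (i + 1)).carrier, MemSocQuot (I i).carrier x) ∨
      ∃ p : ℕ, QuotPrimeOrder (I i).carrier (I (i + 1)).carrier p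

/-- The upper socle series of the brace (carrier of the ideal) `I`. -/
def socChainRel (I : Set B) : ℕ → Set B
  | 0 => {0}
  | n + 1 => {x | MemSocQuotRel I (socChainRel I n) x}

/-- The upper central series of the brace (carrier of the ideal) `I`. -/
def zetaChainRel (I : Set B) : ℕ → Set B
  | 0 => {0}
  | n + 1 => {x | MemZetaQuotRel I (zetaChainRel I n) x}

/-- The upper socle series `Soc_n(B)` of `B`. -/
def socChain (B : Type*) [SkewBrace B] : ℕ → Set B := socChainRel Set.univ

/-- The upper central series `ζ_n(B)` of `B`. -/
def zetaChain (B : Type*) [SkewBrace B] : ℕ → Set B := zetaChainRel Set.univ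

/-- A brace is centrally nilpotent if its upper central series reaches `B`. -/
def IsCentrallyNilpotent (B : Type*) [SkewBrace B] : Prop :=
  ∃ m : ℕ, zetaChain B m = Set.univ

end SkewBrace

namespace SkewBrace

/-- An ideal `I` of `B` is `B`-centrally nilpotent if there is a finite chain
`{0} = J 0 ≤ … ≤ J n = I` of ideals of `B` whose factors are central in `I`. -/
def IsBCentrallyNilpotent {B : Type*} [SkewBrace B] (I : BraceIdeal B) : Prop :=
  ∃ (n : ℕ) (J : ℕ → BraceIdeal B),
    (J 0).carrier = {0} ∧ (J n).carrier = I.carrier ∧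
    (∀ j, j < n → (J j).carrier ⊆ (J (j + 1)).carrier) ∧
    ∀ j, j < n → ∀ x ∈ (J (j + 1)).carrier,
      MemZetaQuotRel I.carrier (J j).carrier x

/-- The Fitting ideal `Fit(B)`: the sum of all `B`-centrally nilpotent ideals of `B`,
i.e. the additive subgroup generated by their union. -/
def fitAdd (B : Type*) [SkewBrace B] : AddSubgroup B :=
  AddSubgroup.closure
    (⋃ I ∈ {I : BraceIdeal B | IsBCentrallyNilpotent I}, I.carrier)

end SkewBrace

namespace SkewBrace

universe u

set_option linter.style.haveILetI false
set_option linter.unusedVariables false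

section Basics

variable {B : Type*} [SkewBrace B]

theorem mul_eq_add_lam (a b : B) : a * b = a + lam a b := by simp [lam]

theorem lam_add (a b c : B) : lam a (b + c) = lam a b + lam a c := by
  simp [lam, skew_distrib, add_assoc]

/-- `λ_a` as an additive homomorphism. -/
def lamHom (a : B) : B →+ B := AddMonoidHom.mk' (lam a) (lam_add a)

theorem lam_zero (a : B) : lam a 0 = 0 := map_zero (lamHom a)

theorem lam_neg (a b : B) : lam a (-b) = -lam a b := map_neg (lamHom a) b

theorem lam_zsmul (a : B) (n : ℤ) (b : B) : lam a (n • b) = n • lam a b :=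
  map_zsmul (lamHom a) n b

theorem lam_nsmul (a : B) (n : ℕ) (b : B) : lam a (n • b) = n • lam a b :=
  map_nsmul (lamHom a) n b

theorem lam_mul (a b c : B) : lam (a * b) c = lam a (lam b c) := by
  have h : lam a (lam b c) = -(lam a b) + lam a (b * c) := by
    conv_lhs => rw [show lam b c = -b + b * c from rfl]
    rw [lam_add, lam_neg]
  rw [h]
  simp [lam, mul_assoc, ← add_assoc]

theorem lam_one (b : B) : lam 1 b = b := by
  simp [lam, one_eq_zero (B := B) ▸ one_mul b, one_eq_zero]

theorem lam_inv_lam (a b : B) : lam a⁻¹ (lam a b) = b := by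
  rw [← lam_mul]; simp [lam_one]

theorem lam_lam_inv (a b : B) : lam a (lam a⁻¹ b) = b := by
  rw [← lam_mul]; simp [lam_one]

theorem add_eq_mul_lam (a b : B) : a + b = a * lam a⁻¹ b := by
  rw [mul_eq_add_lam, lam_lam_inv]

theorem inv_eq (a : B) : a⁻¹ = -lam a⁻¹ a := by
  have : a⁻¹ + lam a⁻¹ a = 0 := by rw [← mul_eq_add_lam, inv_mul_cancel, one_eq_zero]
  exact eq_neg_of_add_eq_zero_left this

/-- membership in the socle -/
def InSoc (y : B) : Prop := ∀ b : B, lam y b = b ∧ y + b = b + y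

theorem InSoc.mul_eq {y : B} (h : InSoc y) (b : B) : y * b = y + b := by
  rw [mul_eq_add_lam, (h b).1]

theorem InSoc.conj {y : B} (h : InSoc y) (b : B) (h' : InSoc (lam b y)) :
    b * y * b⁻¹ = lam b y := by
  rw [mul_inv_eq_iff_eq_mul, h'.mul_eq, (h' b).2, mul_eq_add_lam]

theorem InSoc.pow {y : B} (h : InSoc y) (n : ℕ) : y ^ n = n • y := by
  induction n with
  | zero => simp [one_eq_zero]
  | succ n ih => rw [pow_succ', ih, h.mul_eq, succ_nsmul']

/-- ideals out of the socle -/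
def idealOfSoc (S : AddSubgroup B) (hs : ∀ s ∈ S, InSoc s)
    (hl : ∀ b, ∀ s ∈ S, lam b s ∈ S) : BraceIdeal B where
  carrier := S
  zero_mem := S.zero_mem
  add_mem := S.add_mem
  neg_mem := S.neg_mem
  mul_mem := by
    intro a b ha hb
    rw [(hs a ha).mul_eq]; exact S.add_mem ha hb
  inv_mem := by
    intro a ha
    rw [inv_eq]; exact S.neg_mem (hl _ _ ha)
  addConj_mem := by
    intro b a ha
    rw [← (hs a ha b).2]; simpa using ha
  mulConj_mem := by
    intro b a ha
    rw [(hs a ha).conj b (hs _ (hl _ _ ha))]; exact hl _ _ ha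
  lam_mem := by
    intro b a ha
    exact hl _ _ ha

end Basics

/-- Surjective homomorphisms of braces. -/
structure Epi (B C : Type*) [SkewBrace B] [SkewBrace C] where
  toFun : B → C
  map_add : ∀ a b, toFun (a + b) = toFun a + toFun b
  map_mul : ∀ a b, toFun (a * b) = toFun a * toFun b
  surj : Function.Surjective toFun

namespace Epi

variable {B C D : Type*} [SkewBrace B] [SkewBrace C] [SkewBrace D]

instance : CoeFun (Epi B C) (fun _ => B → C) := ⟨Epi.toFun⟩

/-- additive hom -/
def addHom (f : Epi B C) : B →+ C := AddMonoidHom.mk' f f.map_add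
/-- multiplicative hom -/
def mulHom (f : Epi B C) : B →* C := MonoidHom.mk' f f.map_mul

variable (f : Epi B C)

theorem map_zero : f 0 = 0 := _root_.map_zero f.addHom
theorem map_neg (a : B) : f (-a) = - f a := _root_.map_neg f.addHom a
theorem map_zsmul (n : ℤ) (a : B) : f (n • a) = n • f a := _root_.map_zsmul f.addHom n a
theorem map_nsmul (n : ℕ) (a : B) : f (n • a) = n • f a := _root_.map_nsmul f.addHom n a
theorem map_inv (a : B) : f (a⁻¹) = (f a)⁻¹ := _root_.map_inv f.mulHom a
theorem map_pow (a : B) (n : ℕ) : f (a ^ n) = (f a) ^ n := _root_.map_pow f.mulHom a n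
theorem map_one : f 1 = 1 := _root_.map_one f.mulHom
theorem map_lam (a b : B) : f (lam a b) = lam (f a) (f b) := by
  simp only [lam, map_add, map_neg, map_mul]

theorem neg_add_mem {a b : B} : f (-a + b) = 0 ↔ f a = f b := by
  rw [f.map_add, f.map_neg, neg_add_eq_zero]

/-- pull back of an ideal -/
def comap (I : BraceIdeal C) : BraceIdeal B where
  carrier := {b | f b ∈ I.carrier}
  zero_mem := by simpa [f.map_zero] using I.zero_mem
  add_mem := by intro a b ha hb; simpa [f.map_add] using I.add_mem ha hb
  neg_mem := by intro a ha; simpa [f.map_neg] using I.neg_mem ha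
  mul_mem := by intro a b ha hb; simpa [f.map_mul] using I.mul_mem ha hb
  inv_mem := by intro a ha; simpa [f.map_inv] using I.inv_mem ha
  addConj_mem := by
    intro b a ha; simpa [f.map_add, f.map_neg] using I.addConj_mem (f b) ha
  mulConj_mem := by
    intro b a ha; simpa [f.map_mul, f.map_inv] using I.mulConj_mem (f b) ha
  lam_mem := by intro b a ha; simpa [f.map_lam] using I.lam_mem (f b) ha

/-- composition -/
def comp (g : Epi C D) (f : Epi B C) : Epi B D where
  toFun := fun b => g (f b)
  map_add := by intro a b; rw [f.map_add, g.map_add]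
  map_mul := by intro a b; rw [f.map_mul, g.map_mul]
  surj := g.surj.comp f.surj

/-- identity -/
def refl (B : Type*) [SkewBrace B] : Epi B B := ⟨id, fun _ _ => rfl, fun _ _ => rfl, fun x => ⟨x, rfl⟩⟩

theorem exists_lift (f : Epi B C) (g : Epi B D) (h : ∀ b, f b = 0 → g b = 0) :
    ∃ k : Epi C D, ∀ b, k (f b) = g b := by
  have key : ∀ a b, f a = f b → g a = g b := by
    intro a b hab
    exact g.neg_add_mem.1 (h _ (f.neg_add_mem.2 hab))
  have hk : ∀ b, g (Function.surjInv f.surj (f b)) = g b := by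
    intro b
    exact key _ _ (Function.surjInv_eq f.surj (f b))
  refine ⟨⟨fun c => g (Function.surjInv f.surj c), ?_, ?_, ?_⟩, hk⟩
  · intro a b
    obtain ⟨a, rfl⟩ := f.surj a
    obtain ⟨b, rfl⟩ := f.surj b
    rw [← f.map_add, hk, hk, hk, g.map_add]
  · intro a b
    obtain ⟨a, rfl⟩ := f.surj a
    obtain ⟨b, rfl⟩ := f.surj b
    rw [← f.map_mul, hk, hk, hk, g.map_mul]
  · intro d
    obtain ⟨b, rfl⟩ := g.surj d
    exact ⟨f b, hk b⟩

end Epi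

section Quot

variable {B : Type u} [SkewBrace B]

/-- the congruence of an ideal -/
def idSetoid (I : BraceIdeal B) : Setoid B where
  r a b := -a + b ∈ I.carrier
  iseqv :=
    { refl := by intro a; simpa using I.zero_mem
      symm := by intro a b h; simpa using I.neg_mem h
      trans := by intro a b c h h'; simpa [add_assoc] using I.add_mem h h' }

theorem rel_mul (I : BraceIdeal B) (a b : B) : -a + b ∈ I.carrier ↔ a⁻¹ * b ∈ I.carrier := by
  have h : a⁻¹ * b = lam a⁻¹ (-a + b) := by
    rw [lam_add, lam_neg, ← inv_eq, mul_eq_add_lam]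
  constructor
  · intro hh; rw [h]; exact I.lam_mem _ hh
  · intro hh; rw [h] at hh
    simpa [lam_lam_inv] using I.lam_mem a hh

theorem addConj_mem' (I : BraceIdeal B) (b : B) {a : B} (h : a ∈ I.carrier) :
    -b + a + b ∈ I.carrier := by simpa using I.addConj_mem (-b) h

theorem mulConj_mem' (I : BraceIdeal B) (b : B) {a : B} (h : a ∈ I.carrier) :
    b⁻¹ * a * b ∈ I.carrier := by simpa using I.mulConj_mem (b⁻¹) h

theorem exists_quot (I : BraceIdeal B) :
    ∃ (C : Type u) (_ : SkewBrace C) (f : Epi B C), ∀ b, f b = 0 ↔ b ∈ I.carrier := by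
  let s := idSetoid I
  let C := Quotient s
  letI : Add C := ⟨Quotient.map₂ (· + ·) (by
    intro a a' h b b' h'
    change -a + a' ∈ I.carrier at h
    change -b + b' ∈ I.carrier at h'
    change -(a + b) + (a' + b') ∈ I.carrier
    have := I.add_mem (addConj_mem' I b h) h'
    simpa [add_assoc] using this)⟩
  letI : Mul C := ⟨Quotient.map₂ (· * ·) (by
    intro a a' h b b' h'
    change -a + a' ∈ I.carrier at h
    change -b + b' ∈ I.carrier at h'
    change -(a * b) + (a' * b') ∈ I.carrier
    rw [rel_mul] at *
    have := I.mul_mem (mulConj_mem' I b h) h'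
    simpa [mul_assoc] using this)⟩
  letI : Neg C := ⟨Quotient.map (- ·) (by
    intro a a' h
    change -a + a' ∈ I.carrier at h
    change -(-a) + (-a') ∈ I.carrier
    have := addConj_mem' I (-a) (I.neg_mem h)
    simpa [add_assoc] using this)⟩
  letI : Inv C := ⟨Quotient.map (·⁻¹) (by
    intro a a' h
    change -a + a' ∈ I.carrier at h
    change -(a⁻¹) + (a'⁻¹) ∈ I.carrier
    rw [rel_mul] at *
    have := mulConj_mem' I (a⁻¹) (I.inv_mem h)
    simpa [mul_assoc] using this)⟩
  letI : Zero C := ⟨Quotient.mk s 0⟩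
  letI : One C := ⟨Quotient.mk s 1⟩
  letI ag : AddGroup C := AddGroup.ofLeftAxioms
    (by rintro ⟨a⟩ ⟨b⟩ ⟨c⟩; exact congrArg (Quotient.mk s) (add_assoc a b c))
    (by rintro ⟨a⟩; exact congrArg (Quotient.mk s) (zero_add a))
    (by rintro ⟨a⟩; exact congrArg (Quotient.mk s) (neg_add_cancel a))
  letI mg : Group C := Group.ofLeftAxioms
    (by rintro ⟨a⟩ ⟨b⟩ ⟨c⟩; exact congrArg (Quotient.mk s) (mul_assoc a b c))
    (by rintro ⟨a⟩; exact congrArg (Quotient.mk s) (one_mul a))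
    (by rintro ⟨a⟩; exact congrArg (Quotient.mk s) (inv_mul_cancel a))
  letI sb : SkewBrace C :=
    { ag, mg with
      one_eq_zero := congrArg (Quotient.mk s) one_eq_zero
      skew_distrib := by
        rintro ⟨a⟩ ⟨b⟩ ⟨c⟩; exact congrArg (Quotient.mk s) (skew_distrib a b c) }
  refine ⟨C, sb, ⟨Quotient.mk s, fun _ _ => rfl, fun _ _ => rfl, Quotient.mk_surjective⟩, ?_⟩
  intro b
  change Quotient.mk s b = Quotient.mk s 0 ↔ _
  rw [eq_comm, Quotient.eq]
  change -0 + b ∈ I.carrier ↔ _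
  simp

end Quot

section Factors

variable {B C D : Type u} [SkewBrace B] [SkewBrace C] [SkewBrace D]

theorem lam_zero_left (b : B) : lam 0 b = b := by rw [← one_eq_zero, lam_one]

/-- the kernel of `f` has prime order `p` -/
def Pr (f : Epi B C) (p : ℕ) : Prop :=
  p.Prime ∧ ∃ x, f x = 0 ∧ x ≠ 0 ∧ p • x = 0 ∧ ∀ y, f y = 0 → ∃ n : ℤ, y = n • x

/-- the kernel of `f` is infinite cyclic and in the socle -/
def Inf (f : Epi B C) : Prop :=
  ∃ x, f x = 0 ∧ (∀ n : ℤ, n • x = 0 → n = 0) ∧ (∀ y, f y = 0 → ∃ n : ℤ, y = n • x) ∧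
    ∀ y, f y = 0 → InSoc y

theorem ker_lam (f : Epi B C) {k : B} (hk : f k = 0) (b : B) : f (lam b k) = 0 := by
  rw [f.map_lam, hk, lam_zero]

theorem ker_conj (f : Epi B C) {k : B} (hk : f k = 0) (b : B) : f (b + k + -b) = 0 := by
  rw [f.map_add, f.map_add, hk, f.map_neg]; simp

theorem ker_mulConj (f : Epi B C) {k : B} (hk : f k = 0) (b : B) : f (b * k * b⁻¹) = 0 := by
  rw [f.map_mul, f.map_mul, hk, f.map_inv, ← one_eq_zero]; simp

theorem ker_star (f : Epi B C) {k : B} (hk : f k = 0) (b : B) : f (-b + lam k b) = 0 := by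
  rw [f.neg_add_mem, f.map_lam, hk, lam_zero_left]

theorem Pr.gen {f : Epi B C} {p : ℕ} (h : Pr f p) {z : B} (hz : f z = 0) (hz0 : z ≠ 0) :
    ∀ y, f y = 0 → ∃ n : ℤ, y = n • z := by
  obtain ⟨hp, x, hx, hx0, hpx, hgen⟩ := h
  obtain ⟨m, rfl⟩ := hgen z hz
  have hcop : IsCoprime (p : ℤ) m := by
    rw [(Nat.prime_iff_prime_int.1 hp).coprime_iff_not_dvd]
    rintro ⟨c, rfl⟩
    apply hz0
    rw [mul_comm, mul_zsmul, natCast_zsmul, hpx, zsmul_zero]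
  obtain ⟨a, b, hab⟩ := hcop
  intro y hy
  obtain ⟨n, rfl⟩ := hgen y hy
  refine ⟨n * b, ?_⟩
  have h1 : (a * p + b * m) • x = x := by rw [hab, one_zsmul]
  rw [add_zsmul, mul_zsmul, natCast_zsmul, hpx, zsmul_zero, zero_add] at h1
  rw [mul_zsmul, ← mul_zsmul x b m, h1]

theorem Pr.card {f : Epi B C} {p : ℕ} (h : Pr f p) : Nat.card {b // f b = 0} = p := by
  obtain ⟨hp, x, hx, hx0, hpx, hgen⟩ := h
  have h1 : addOrderOf x = p := by
    haveI := Fact.mk hp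
    exact addOrderOf_eq_prime hpx hx0
  rw [← h1, ← Nat.card_zmultiples]
  apply Nat.card_congr
  apply Equiv.subtypeEquivRight
  intro b
  rw [AddSubgroup.mem_zmultiples_iff]
  constructor
  · intro hb
    obtain ⟨n, rfl⟩ := hgen b hb
    exact ⟨n, rfl⟩
  · rintro ⟨n, rfl⟩
    rw [f.map_zsmul, hx, zsmul_zero]

theorem Pr.nsmul {f : Epi B C} {p : ℕ} (h : Pr f p) {z : B} (hz : f z = 0) : p • z = 0 := by
  obtain ⟨hp, x, hx, hx0, hpx, hgen⟩ := h
  obtain ⟨m, rfl⟩ := hgen z hz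
  rw [← natCast_zsmul, ← mul_zsmul, mul_comm, mul_zsmul, natCast_zsmul, hpx, zsmul_zero]

theorem Pr.pow {f : Epi B C} {p : ℕ} (h : Pr f p) {z : B} (hz : f z = 0) : z ^ p = 1 := by
  have hc : Nat.card f.mulHom.ker = p := by
    rw [← h.card]
    apply Nat.card_congr
    apply Equiv.subtypeEquivRight
    intro b
    rw [MonoidHom.mem_ker, one_eq_zero]; rfl
  have hz' : z ∈ f.mulHom.ker := by
    rw [MonoidHom.mem_ker, one_eq_zero]; exact hz
  have := pow_card_eq_one' (G := f.mulHom.ker) (x := ⟨z, hz'⟩)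
  rw [hc] at this
  simpa using congrArg Subtype.val this

theorem Pr.two {f : Epi B C} (h : Pr f 2) :
    ∃ x, f x = 0 ∧ x ≠ 0 ∧ x + x = 0 ∧ (∀ y, f y = 0 → y = 0 ∨ y = x) := by
  obtain ⟨hp, x, hx, hx0, hpx, hgen⟩ := h
  refine ⟨x, hx, hx0, by rwa [two_nsmul] at hpx, ?_⟩
  intro y hy
  obtain ⟨n, rfl⟩ := hgen y hy
  rcases Int.even_or_odd' n with ⟨m, rfl | rfl⟩
  · left
    rw [mul_comm, mul_zsmul]
    rw [show (2 : ℤ) • x = 0 by simpa [two_zsmul, two_nsmul] using hpx, zsmul_zero]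
  · right
    rw [add_zsmul, mul_comm, mul_zsmul]
    rw [show (2 : ℤ) • x = 0 by simpa [two_zsmul, two_nsmul] using hpx, zsmul_zero]
    simp

theorem Pr.two_central {f : Epi B C} (h : Pr f 2) {j : B} (hj : f j = 0) (b : B) :
    j + b = b + j ∧ b * j = j * b ∧ lam b j = j := by
  obtain ⟨x, hx, hx0, hxx, hJ⟩ := h.two
  rcases hJ j hj with rfl | rfl
  · refine ⟨by simp, ?_, lam_zero _⟩
    rw [← one_eq_zero]; simp
  · refine ⟨?_, ?_, ?_⟩
    · rcases hJ _ (ker_conj f hj b) with h | h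
      · exfalso; apply hx0
        have := congrArg (fun z => -b + z + b) h
        simpa [add_assoc] using this
      · exact (add_neg_eq_iff_eq_add.1 h).symm
    · rcases hJ _ (ker_mulConj f hj b) with h | h
      · exfalso; apply hx0
        rw [← one_eq_zero] at h ⊢
        have := congrArg (fun z => b⁻¹ * z * b) h
        simpa [mul_assoc] using this
      · exact (mul_inv_eq_iff_eq_mul.1 h)
    · rcases hJ _ (ker_lam f hj b) with h | h
      · exfalso; apply hx0
        rw [← lam_inv_lam b j, h, lam_zero]
      · exact h

theorem comm_of_gen {y k k' j j' : B} {n n' : ℤ} (hj : ∀ b, j + b = b + j)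
    (hj' : ∀ b, j' + b = b + j') (hk : k = n • y + j) (hk' : k' = n' • y + j') :
    AddCommute k k' := by
  subst hk hk'
  have h1 : ∀ b, AddCommute j b := hj
  have h2 : ∀ b, AddCommute j' b := hj'
  refine AddCommute.add_left ?_ (h1 _)
  refine AddCommute.add_right ?_ (h2 _).symm
  exact ((AddCommute.refl y).zsmul_left n).zsmul_right n'

/-- kernel of composite is additively abelian -/
theorem ker_comp_comm (f : Epi B C) (g : Epi C D) {y' : C}
    (hgen : ∀ c, g c = 0 → ∃ n : ℤ, c = n • y')
    (hcen : ∀ j, f j = 0 → ∀ b, j + b = b + j) {k k' : B}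
    (hk : g (f k) = 0) (hk' : g (f k') = 0) : AddCommute k k' := by
  obtain ⟨y, rfl⟩ := f.surj y'
  obtain ⟨n, hn⟩ := hgen _ hk
  obtain ⟨n', hn'⟩ := hgen _ hk'
  refine comm_of_gen (y := y) (n := n) (n' := n') (j := -(n • y) + k) (j' := -(n' • y) + k')
    (hcen _ ?_) (hcen _ ?_) (by simp) (by simp)
  · rw [f.neg_add_mem, f.map_zsmul, hn]
  · rw [f.neg_add_mem, f.map_zsmul, hn']

theorem swap_core (f : Epi B C) (g : Epi C D) {p : ℕ} (hg : Pr g p)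
    (hcen : ∀ j, f j = 0 → ∀ b, j + b = b + j)
    (hcomm : ∀ k j, g (f k) = 0 → f j = 0 → k * j = j * k)
    (htor : ∀ j, f j = 0 → p • j = 0 → j = 0)
    (hpow : ∀ j, f j = 0 → j ^ p = 1 → j = 1)
    {t : B} (ht : g (f t) = 0) (ht0 : t ≠ 0) (hpt : p • t = 0) :
    ∃ (E : Type u) (_ : SkewBrace E) (q : Epi B E) (h : Epi E D), Pr q p ∧
      (∀ b, h (q b) = g (f b)) ∧ (∀ j, f j = 0 → q j = 0 → j = 0) ∧
      (∀ e, h e = 0 → ∃ j, f j = 0 ∧ q j = e) := by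
  have hcK : ∀ {k k'}, g (f k) = 0 → g (f k') = 0 → AddCommute k k' := by
    obtain ⟨_, y', _, _, _, hgen⟩ := id hg
    intro k k' h h'
    exact ker_comp_comm f g hgen hcen h h'
  have hft : f t ≠ 0 := fun h => ht0 (htor _ h hpt)
  have hdec : ∀ k, g (f k) = 0 → ∃ n : ℤ, f (-(n • t) + k) = 0 := by
    intro k hk
    obtain ⟨n, hn⟩ := hg.gen ht hft _ hk
    refine ⟨n, ?_⟩
    rw [f.neg_add_mem, f.map_zsmul, hn]
  let S : Set B := {k | g (f k) = 0 ∧ p • k = 0}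
  have hadd : ∀ {a b}, a ∈ S → b ∈ S → a + b ∈ S := by
    rintro a b ⟨ha, ha'⟩ ⟨hb, hb'⟩
    refine ⟨by rw [f.map_add, g.map_add, ha, hb, add_zero], ?_⟩
    rw [(hcK ha hb).add_nsmul, ha', hb', add_zero]
  have hneg : ∀ {a}, a ∈ S → -a ∈ S := by
    rintro a ⟨ha, ha'⟩
    refine ⟨by rw [f.map_neg, g.map_neg, ha, neg_zero], by rw [neg_nsmul, ha', neg_zero]⟩
  have hlam : ∀ (b : B) {a}, a ∈ S → lam b a ∈ S := by
    rintro b a ⟨ha, ha'⟩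
    exact ⟨ker_lam (g.comp f) ha b, by rw [← lam_nsmul, ha', lam_zero]⟩
  have hmul : ∀ {a b}, a ∈ S → b ∈ S → a * b ∈ S := by
    intro a b ha hb
    rw [mul_eq_add_lam]; exact hadd ha (hlam _ hb)
  have hzero : (0 : B) ∈ S := ⟨by rw [f.map_zero, g.map_zero], by simp⟩
  have hzs : ∀ n : ℤ, n • t ∈ S := by
    intro n
    refine ⟨by rw [f.map_zsmul, g.map_zsmul, ht, zsmul_zero], ?_⟩
    rw [← natCast_zsmul, ← mul_zsmul, mul_comm, mul_zsmul, natCast_zsmul, hpt, zsmul_zero]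
  have hSJ : ∀ a, a ∈ S → f a = 0 → a = 0 := fun a ha h => htor a h ha.2
  have hpowS : ∀ a, a ∈ S → a ^ p = 1 := by
    intro a ha
    have h1 : ∀ n : ℕ, a ^ n ∈ S := by
      intro n
      induction n with
      | zero => simpa [one_eq_zero] using hzero
      | succ n ih => rw [pow_succ]; exact hmul ih ha
    rw [one_eq_zero]
    apply hSJ _ (h1 p)
    rw [f.map_pow, hg.pow ha.1, one_eq_zero]
  have hmem : ∀ k, g (f k) = 0 → k ^ p = 1 → k ∈ S := by
    intro k hk hkp
    obtain ⟨n, hn⟩ := hdec k hk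
    set s := n • t
    have hs : s ∈ S := hzs n
    have hk2 : k = s * lam s⁻¹ (-s + k) := by rw [← add_eq_mul_lam]; simp
    have hj : f (lam s⁻¹ (-s + k)) = 0 := ker_lam f hn _
    set j := lam s⁻¹ (-s + k)
    have hc : Commute s j := hcomm s j hs.1 hj
    have : j ^ p = 1 := by
      rw [hk2, hc.mul_pow, hpowS s hs, one_mul] at hkp
      exact hkp
    rw [hpow j hj this, mul_one] at hk2
    rw [hk2]; exact hs
  let T : BraceIdeal B :=
    { carrier := S
      zero_mem := hzero
      add_mem := hadd
      neg_mem := hneg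
      mul_mem := hmul
      inv_mem := by
        intro a ha
        rw [inv_eq]; exact hneg (hlam _ ha)
      addConj_mem := by
        rintro b a ⟨ha, ha'⟩
        refine ⟨ker_conj (g.comp f) ha b, ?_⟩
        have : ∀ n : ℕ, n • (b + a + -b) = b + n • a + -b := by
          intro n
          induction n with
          | zero => simp
          | succ n ih => rw [succ_nsmul, ih, succ_nsmul]; simp [add_assoc]
        rw [this, ha']; simp
      mulConj_mem := by
        intro b a ha
        apply hmem _ (ker_mulConj (g.comp f) ha.1 b)
        rw [conj_pow, hpowS a ha]; simp
      lam_mem := hlam }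
  obtain ⟨E, iE, q, hq⟩ := exists_quot T
  have hqS : ∀ b, q b = 0 ↔ b ∈ S := hq
  obtain ⟨h, hh⟩ := q.exists_lift (g.comp f) (fun b hb => ((hq b).1 hb).1)
  refine ⟨E, iE, q, h, ⟨hg.1, t, ?_, ht0, hpt, ?_⟩, hh, ?_, ?_⟩
  · rw [hqS]; exact ⟨ht, hpt⟩
  · intro y hy
    rw [hqS] at hy
    obtain ⟨n, hn⟩ := hdec y hy.1
    refine ⟨n, ?_⟩
    have := hSJ _ (hadd (hneg (hzs n)) hy) hn
    exact (neg_add_eq_zero.1 this).symm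
  · intro j hj hqj
    exact hSJ j ((hqS j).1 hqj) hj
  · intro e he
    obtain ⟨b, rfl⟩ := q.surj e
    rw [hh] at he
    obtain ⟨n, hn⟩ := hdec b he
    refine ⟨_, hn, ?_⟩
    rw [q.map_add, q.map_neg, (hqS _).2 (hzs n)]; simp

/-- (2, odd p) can be swapped -/
theorem swap_two_odd (f : Epi B C) (g : Epi C D) {p : ℕ} (hf : Pr f 2) (hg : Pr g p)
    (hp2 : p ≠ 2) :
    ∃ (E : Type u) (_ : SkewBrace E) (q : Epi B E) (h : Epi E D), Pr q p ∧ Pr h 2 := by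
  have hodd : Odd p := hg.1.odd_of_ne_two hp2
  obtain ⟨m, hm⟩ := hodd
  have htor : ∀ j, f j = 0 → p • j = 0 → j = 0 := by
    intro j hj h
    rw [hm, add_nsmul, mul_comm, mul_nsmul', hf.nsmul hj] at h
    simpa using h
  have hpow : ∀ j, f j = 0 → j ^ p = 1 → j = 1 := by
    intro j hj h
    rw [hm, pow_add, pow_mul, hf.pow hj] at h
    simpa using h
  obtain ⟨_, y', hy', hy0, hpy, hgen⟩ := id hg
  obtain ⟨y, rfl⟩ := f.surj y'
  have hpy' : f (p • y) = 0 := by rw [f.map_nsmul, hpy]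
  obtain ⟨E, iE, q, h, hq, hh, hJ, hker⟩ := swap_core f g hg
    (fun j hj b => (hf.two_central hj b).1) (fun k j _ hj => (hf.two_central hj k).2.1) htor hpow
    (t := 2 • y) (by rw [f.map_nsmul, g.map_nsmul, hy', nsmul_zero])
    (by
      intro h0
      apply hy0
      have h1 : 2 • f y = 0 := by rw [← f.map_nsmul, h0, f.map_zero]
      rw [hm, add_nsmul, mul_comm, mul_nsmul', h1] at hpy
      simpa using hpy)
    (by rw [← mul_nsmul', mul_comm, mul_nsmul', hf.nsmul hpy'])
  refine ⟨E, iE, q, h, hq, Nat.prime_two, ?_⟩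
  obtain ⟨_, x, hx, hx0, hxx, hgx⟩ := hf
  refine ⟨q x, by rw [hh, hx, g.map_zero], fun h => hx0 (hJ x hx h), ?_, ?_⟩
  · rw [← q.map_nsmul, hxx, q.map_zero]
  · intro e he
    obtain ⟨j, hj, rfl⟩ := hker e he
    obtain ⟨n, rfl⟩ := hgx j hj
    exact ⟨n, q.map_zsmul _ _⟩

theorem iter_lam (k b c : B) (hc : lam k c = c) (hb : lam k b = b + c) (n : ℕ) :
    lam (k ^ n) b = b + n • c := by
  induction n with
  | zero => simp [lam_one]
  | succ n ih => rw [pow_succ', lam_mul, ih, lam_add, lam_nsmul, hc, hb, succ_nsmul', add_assoc]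

theorem iter_lam' (k x : B) (m : ℤ) (h : lam k x = m • x) (n : ℕ) :
    lam (k ^ n) x = (m ^ n) • x := by
  induction n with
  | zero => simp [lam_one]
  | succ n ih => rw [pow_succ', lam_mul, ih, lam_zsmul, h, ← mul_zsmul, pow_succ]

/-- (Z, odd p) can be swapped or merged -/
theorem swap_inf_odd (f : Epi B C) (g : Epi C D) {p : ℕ} (hf : Inf f) (hg : Pr g p)
    (hp2 : p ≠ 2) :
    (∃ (E : Type u) (_ : SkewBrace E) (q : Epi B E) (h : Epi E D), Pr q p ∧ Inf h) ∨
    ∃ h : Epi B D, Inf h := by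
  have hodd : Odd p := hg.1.odd_of_ne_two hp2
  have hp0 : p ≠ 0 := hg.1.ne_zero
  obtain ⟨x, hx, hxinf, hxgen, hsoc⟩ := hf
  have hkp : ∀ k, g (f k) = 0 → f (k ^ p) = 0 := by
    intro k hk
    rw [f.map_pow, hg.pow hk, one_eq_zero]
  have hkx : ∀ k, g (f k) = 0 → lam k x = x := by
    intro k hk
    obtain ⟨m, hm⟩ := hxgen _ (ker_lam f hx k)
    have h1 := iter_lam' k x m hm p
    rw [(hsoc _ (hkp k hk) x).1] at h1
    have h2 : (m ^ p - 1) • x = 0 := by rw [sub_zsmul, ← h1]; simp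
    have h3 : m ^ p = 1 := by linarith [hxinf _ h2]
    have h4 : m = 1 := by
      apply hodd.pow_injective
      simpa using h3
    rw [hm, h4, one_zsmul]
  have hkJ : ∀ k j, g (f k) = 0 → f j = 0 → lam k j = j := by
    intro k j hk hj
    obtain ⟨n, rfl⟩ := hxgen j hj
    rw [lam_zsmul, hkx k hk]
  have hcen : ∀ j, f j = 0 → ∀ b, j + b = b + j := fun j hj b => (hsoc j hj b).2
  have hcomm : ∀ k j, g (f k) = 0 → f j = 0 → k * j = j * k := by
    intro k j hk hj
    rw [(hsoc j hj).mul_eq, mul_eq_add_lam, hkJ k j hk hj, hcen j hj]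
  have htor : ∀ j, f j = 0 → p • j = 0 → j = 0 := by
    intro j hj h
    obtain ⟨n, rfl⟩ := hxgen j hj
    rw [← natCast_zsmul, ← mul_zsmul] at h
    have := hxinf _ h
    have : n = 0 := by
      rcases mul_eq_zero.1 this with h | h
      · exact absurd (by exact_mod_cast h) hp0
      · exact h
    rw [this, zero_zsmul]
  have hpow : ∀ j, f j = 0 → j ^ p = 1 → j = 1 := by
    intro j hj h
    rw [(hsoc j hj).pow] at h
    rw [one_eq_zero] at *
    exact htor j hj h
  by_cases hT : ∃ t, g (f t) = 0 ∧ t ≠ 0 ∧ p • t = 0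
  · left
    obtain ⟨t, ht, ht0, hpt⟩ := hT
    obtain ⟨E, iE, q, h, hq, hh, hJ, hker⟩ := swap_core f g hg hcen hcomm htor hpow ht ht0 hpt
    refine ⟨E, iE, q, h, hq, q x, by rw [hh, hx, g.map_zero], ?_, ?_, ?_⟩
    · intro n hn
      apply hxinf
      apply hJ
      · rw [f.map_zsmul, hx, zsmul_zero]
      · rw [q.map_zsmul, hn]
    · intro e he
      obtain ⟨j, hj, rfl⟩ := hker e he
      obtain ⟨n, rfl⟩ := hxgen j hj
      exact ⟨n, q.map_zsmul _ _⟩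
    · intro e he b
      obtain ⟨j, hj, rfl⟩ := hker e he
      obtain ⟨b, rfl⟩ := q.surj b
      rw [← q.map_lam, ← q.map_add, ← q.map_add, (hsoc j hj b).1, (hsoc j hj b).2]
      exact ⟨rfl, rfl⟩
  · right
    push Not at hT
    have hT' : ∀ t, g (f t) = 0 → p • t = 0 → t = 0 := by
      intro t h1 h2
      by_contra h3
      exact hT t h1 h3 h2
    obtain ⟨_, y', hy', hy0, hpy, hgen⟩ := id hg
    have hcK : ∀ {k k'}, g (f k) = 0 → g (f k') = 0 → AddCommute k k' := by
      intro k k' h h'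
      exact ker_comp_comm f g hgen hcen h h'
    obtain ⟨y, rfl⟩ := f.surj y'
    have hgx : g (f x) = 0 := by rw [hx, g.map_zero]
    have hpJ : ∀ k, g (f k) = 0 → f (p • k) = 0 := by
      intro k hk
      rw [f.map_nsmul, hg.nsmul hk]
    -- cancel p
    have hcan : ∀ a b, g (f a) = 0 → g (f b) = 0 → p • a = p • b → a = b := by
      intro a b ha hb hab
      have : -a + b = 0 := by
        apply hT'
        · rw [f.map_add, f.map_neg, g.map_add, g.map_neg, ha, hb]; simp
        · rw [((hcK ha hb).neg_left).add_nsmul, neg_nsmul, hab]; simp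
      exact neg_add_eq_zero.1 this
    obtain ⟨n, hn⟩ := hxgen _ (hpJ y hy')
    have hcop : IsCoprime (p : ℤ) n := by
      rw [(Nat.prime_iff_prime_int.1 hg.1).coprime_iff_not_dvd]
      rintro ⟨c, rfl⟩
      apply hy0
      have : y = c • x := by
        apply hcan _ _ hy'
        · rw [f.map_zsmul, hx, zsmul_zero, g.map_zero]
        · rw [hn, mul_zsmul, natCast_zsmul]
      rw [this, f.map_zsmul, hx, zsmul_zero]
    obtain ⟨a, b, hab⟩ := hcop
    have hK : ∀ (c : ℤ) {k}, g (f k) = 0 → g (f (c • k)) = 0 := by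
      intro c k hk
      rw [f.map_zsmul, g.map_zsmul, hk, zsmul_zero]
    have hKadd : ∀ {k k'}, g (f k) = 0 → g (f k') = 0 → g (f (k + k')) = 0 := by
      intro k k' hk hk'
      rw [f.map_add, g.map_add, hk, hk', add_zero]
    set z := a • x + b • y with hz
    have hzK : g (f z) = 0 := hKadd (hK a hgx) (hK b hy')
    have hps : ∀ (c : ℤ) (k : B), p • c • k = c • p • k := by
      intro c k
      rw [← natCast_zsmul, ← natCast_zsmul, ← mul_zsmul, ← mul_zsmul, mul_comm]
    have hpz : p • z = x := by
      rw [hz, (hcK (hK a hgx) (hK b hy')).add_nsmul, hps, hps, hn, ← natCast_zsmul,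
        ← mul_zsmul, ← mul_zsmul, ← add_zsmul, hab, one_zsmul]
    refine ⟨g.comp f, z, hzK, ?_, ?_, ?_⟩
    · intro c hc
      apply hxinf
      rw [← hpz, ← hps, hc, nsmul_zero]
    · intro k hk
      obtain ⟨c, hc⟩ := hxgen _ (hpJ k hk)
      refine ⟨c, hcan _ _ hk (hK c hzK) ?_⟩
      rw [hc, hps, hpz]
    · intro k hk b
      change g (f k) = 0 at hk
      have hcent : ∀ k b, g (f k) = 0 → k + b = b + k := by
        intro k b hk
        have h1 : b + k + -b = k := by
          apply hcan _ _ (ker_conj (g.comp f) hk b) hk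
          have : ∀ n : ℕ, n • (b + k + -b) = b + n • k + -b := by
            intro n
            induction n with
            | zero => simp
            | succ n ih => rw [succ_nsmul, ih, succ_nsmul]; simp [add_assoc]
          rw [this, ← hcen _ (hpJ k hk) b]; simp
        exact (add_neg_eq_iff_eq_add.1 h1).symm
      refine ⟨?_, hcent k b hk⟩
      have hkK : ∀ w, g (f w) = 0 → lam k w = w := by
        intro w hw
        apply hcan _ _ (ker_lam (g.comp f) hw k) hw
        rw [← lam_nsmul, hkJ k _ hk (hpJ w hw)]
      have hc : g (f (-b + lam k b)) = 0 := ker_star (g.comp f) hk b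
      have h1 := iter_lam k b (-b + lam k b) (hkK _ hc) (by simp) p
      rw [(hsoc _ (hkp k hk) b).1] at h1
      have h2 : p • (-b + lam k b) = 0 := by simpa using h1.symm
      exact (neg_add_eq_zero.1 (hT' _ hc h2)).symm

/-- halving the infinite cyclic factor -/
theorem double_inf (f : Epi B C) (hf : Inf f) :
    ∃ (E : Type u) (_ : SkewBrace E) (q : Epi B E) (h : Epi E C), Inf q ∧ Pr h 2 ∧
      (∀ b, h (q b) = f b) ∧ (∀ b, q b = 0 ↔ ∃ z, f z = 0 ∧ b = 2 • z) := by
  obtain ⟨x, hx, hxinf, hxgen, hsoc⟩ := hf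
  have hfz : ∀ n : ℤ, f (n • x) = 0 := by
    intro n; rw [f.map_zsmul, hx, zsmul_zero]
  let S := AddSubgroup.zmultiples (2 • x)
  have hSf : ∀ s ∈ S, f s = 0 := by
    intro s hs
    obtain ⟨n, rfl⟩ := AddSubgroup.mem_zmultiples_iff.1 hs
    rw [f.map_zsmul, f.map_nsmul, hx]; simp
  have hsw : ∀ n : ℤ, 2 • n • x = n • 2 • x := by
    intro n
    rw [← natCast_zsmul, ← natCast_zsmul, ← mul_zsmul, ← mul_zsmul, mul_comm]
  let T := idealOfSoc S (fun s hs => hsoc s (hSf s hs)) (by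
    intro b s hs
    obtain ⟨n, rfl⟩ := AddSubgroup.mem_zmultiples_iff.1 hs
    obtain ⟨m, hm⟩ := hxgen _ (ker_lam f hx b)
    rw [lam_zsmul, lam_nsmul, hm, hsw]
    exact S.zsmul_mem (S.zsmul_mem (AddSubgroup.mem_zmultiples _) _) _)
  obtain ⟨E, iE, q, hq⟩ := exists_quot T
  have hqS : ∀ b, q b = 0 ↔ b ∈ S := hq
  obtain ⟨h, hh⟩ := q.exists_lift f (fun b hb => hSf b ((hqS b).1 hb))
  refine ⟨E, iE, q, h, ⟨2 • x, ?_, ?_, ?_, ?_⟩, ⟨Nat.prime_two, q x, ?_, ?_, ?_, ?_⟩, hh, ?_⟩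
  · rw [hqS]; exact AddSubgroup.mem_zmultiples _
  · intro n hn
    rw [← natCast_zsmul, ← mul_zsmul] at hn
    have := hxinf _ hn
    push_cast at this; lia
  · intro y hy
    obtain ⟨n, rfl⟩ := AddSubgroup.mem_zmultiples_iff.1 ((hqS y).1 hy)
    exact ⟨n, rfl⟩
  · intro y hy
    exact hsoc y (hSf y ((hqS y).1 hy))
  · rw [hh, hx]
  · intro h0
    obtain ⟨n, hn⟩ := AddSubgroup.mem_zmultiples_iff.1 ((hqS x).1 h0)
    rw [← natCast_zsmul, ← mul_zsmul] at hn
    have h1 : (n * (2 : ℕ) - 1) • x = 0 := by rw [sub_zsmul, hn]; simp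
    have := hxinf _ h1
    push_cast at this; lia
  · rw [← q.map_nsmul, hqS]; exact AddSubgroup.mem_zmultiples _
  · intro e he
    obtain ⟨b, rfl⟩ := q.surj e
    rw [hh] at he
    obtain ⟨n, rfl⟩ := hxgen b he
    exact ⟨n, q.map_zsmul _ _⟩
  · intro b
    rw [hqS, AddSubgroup.mem_zmultiples_iff]
    constructor
    · rintro ⟨n, rfl⟩
      exact ⟨n • x, hfz n, (hsw n).symm⟩
    · rintro ⟨z, hz, rfl⟩
      obtain ⟨n, rfl⟩ := hxgen z hz
      exact ⟨n, (hsw n).symm⟩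

theorem swap_two_inf (f : Epi B C) (g : Epi C D) (hf : Pr f 2) (hg : Inf g) :
    ∃ (E₁ E₂ E₃ : Type u) (_ : SkewBrace E₁) (_ : SkewBrace E₂) (_ : SkewBrace E₃)
      (h₀ : Epi B E₁) (h₁ : Epi E₁ E₂) (h₂ : Epi E₂ E₃) (h₃ : Epi E₃ D),
      Inf h₀ ∧ Pr h₁ 2 ∧ Pr h₂ 2 ∧ Pr h₃ 2 := by
  obtain ⟨E₃, i₃, g₁, h₃, hg₁, hh₃, hc₃, hk₃⟩ := double_inf g hg
  obtain ⟨E₂, i₂, g₂, h₂, hg₂, hh₂, hc₂, hk₂⟩ := double_inf g₁ hg₁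
  have hkg : ∀ c, g₂ c = 0 ↔ ∃ m, g m = 0 ∧ c = 4 • m := by
    intro c
    rw [hk₂]
    constructor
    · rintro ⟨z, hz, rfl⟩
      obtain ⟨m, hm, rfl⟩ := (hk₃ z).1 hz
      exact ⟨m, hm, by rw [← mul_nsmul']⟩
    · rintro ⟨m, hm, rfl⟩
      exact ⟨2 • m, (hk₃ _).2 ⟨m, hm, rfl⟩, by rw [← mul_nsmul']⟩
  obtain ⟨y', hy', hyinf, hygen, hsoc⟩ := hg
  have hcen : ∀ j, f j = 0 → ∀ b, j + b = b + j := fun j hj b => (hf.two_central hj b).1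
  have hcK : ∀ {k k'}, g (f k) = 0 → g (f k') = 0 → AddCommute k k' := by
    intro k k' h h'
    exact ker_comp_comm f g hygen hcen h h'
  have hjj : ∀ j, f j = 0 → j + j = 0 := by
    intro j hj
    rw [← two_nsmul]; exact hf.nsmul hj
  have h2c : ∀ k b, g (f k) = 0 → 2 • k + b = b + 2 • k := by
    intro k b hk
    have h1 : f (-k + (b + k + -b)) = 0 := by
      rw [f.neg_add_mem, f.map_add, f.map_add, ← (hsoc _ hk (f b)).2, f.map_neg]; simp
    have hj2 := hjj _ h1
    set j := -k + (b + k + -b)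
    have h2 : b + k + -b = k + j := by simp [j]
    have h3 : b + 2 • k + -b = (b + k + -b) + (b + k + -b) := by
      rw [two_nsmul]; simp [add_assoc]
    rw [h2] at h3
    have h4 : k + j + (k + j) = 2 • k := by
      rw [add_assoc, ← add_assoc j k j, hcen j h1 k, add_assoc k j j, hj2, add_zero, two_nsmul]
    rw [h4] at h3
    exact (add_neg_eq_iff_eq_add.1 h3).symm
  have h4 : ∀ k : B, 4 • k = 2 • k + 2 • k := by
    intro k; rw [← add_nsmul]
  have hSoc : ∀ k, g (f k) = 0 → InSoc (4 • k) := by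
    intro k hk b
    have hlm : ∀ u, g (f u) = 0 → ∀ b, f (-b + lam u b) = 0 := by
      intro u hu b
      rw [f.neg_add_mem, f.map_lam, (hsoc _ hu _).1]
    refine ⟨?_, ?_⟩
    · have hu : g (f (2 • k)) = 0 := by rw [f.map_nsmul, g.map_nsmul, hk, nsmul_zero]
      set u := 2 • k with hudef
      have e1 : lam u u = u := by
        have hj := hlm u hu k
        have : lam u k = k + (-k + lam u k) := by simp
        have hj2 := hjj _ hj
        set j := -k + lam u k
        conv_lhs => rw [hudef]
        rw [lam_nsmul, this, two_nsmul, add_assoc, ← add_assoc j k j, hcen j hj k,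
          add_assoc k j j, hj2, add_zero, hudef, two_nsmul]
      have e2 : 4 • k = u * u := by rw [mul_eq_add_lam, e1, h4]
      rw [e2, lam_mul]
      have hj := hlm u hu b
      have : lam u b = b + (-b + lam u b) := by simp
      have hj2 := hjj _ hj
      set j := -b + lam u b
      rw [this, lam_add, this, (hf.two_central hj u).2.2, add_assoc, hj2, add_zero]
    · rw [h4, add_assoc, h2c k b hk, ← add_assoc, h2c k b hk, add_assoc]
  obtain ⟨y, rfl⟩ := f.surj y'
  have hfy4 : ∀ n : ℤ, f (n • 4 • y) = (n * 4) • f y := by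
    intro n; rw [f.map_zsmul, f.map_nsmul, ← natCast_zsmul, ← mul_zsmul]; norm_cast
  let S := AddSubgroup.zmultiples (4 • y)
  have hS : ∀ k, g (f k) = 0 → 4 • k ∈ S := by
    intro k hk
    obtain ⟨n, hn⟩ := hygen _ hk
    have hj : f (-(n • y) + k) = 0 := by rw [f.neg_add_mem, f.map_zsmul, hn]
    have hkk : k = n • y + (-(n • y) + k) := by simp
    have hj2 := hjj _ hj
    set j := -(n • y) + k
    have hco : AddCommute (n • y) j := (hcen j hj _).symm
    rw [hkk, hco.add_nsmul, h4 j, two_nsmul, hj2, add_zero, AddSubgroup.mem_zmultiples_iff]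
    refine ⟨n, ?_⟩
    rw [← natCast_zsmul, ← natCast_zsmul, ← mul_zsmul, ← mul_zsmul, mul_comm]
    simp
  have hS' : ∀ s ∈ S, ∃ k, g (f k) = 0 ∧ s = 4 • k := by
    intro s hs
    obtain ⟨n, rfl⟩ := AddSubgroup.mem_zmultiples_iff.1 hs
    refine ⟨n • y, by rw [f.map_zsmul, g.map_zsmul, hy', zsmul_zero], ?_⟩
    rw [← natCast_zsmul, ← natCast_zsmul, ← mul_zsmul, ← mul_zsmul, mul_comm]
  let T := idealOfSoc S (by
    intro s hs
    obtain ⟨k, hk, rfl⟩ := hS' s hs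
    exact hSoc k hk) (by
    intro b s hs
    obtain ⟨k, hk, rfl⟩ := hS' s hs
    rw [lam_nsmul]
    exact hS _ (ker_lam (g.comp f) hk b))
  obtain ⟨E₁, i₁, q, hq⟩ := exists_quot T
  have hqS : ∀ b, q b = 0 ↔ b ∈ S := hq
  obtain ⟨h₁, hh₁⟩ := q.exists_lift (g₂.comp f) (by
    intro b hb
    obtain ⟨k, hk, rfl⟩ := hS' b ((hqS b).1 hb)
    exact (hkg _).2 ⟨f k, hk, f.map_nsmul _ _⟩)
  have hh₁' : ∀ b, h₁ (q b) = g₂ (f b) := hh₁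
  refine ⟨E₁, E₂, E₃, i₁, i₂, i₃, q, h₁, h₂, h₃, ?_, ?_, hh₂, hh₃⟩
  · refine ⟨4 • y, (hqS _).2 (hS y hy'), ?_, ?_, ?_⟩
    · intro n hn
      have h1 := hfy4 n
      rw [hn, f.map_zero] at h1
      have := hyinf _ h1.symm
      lia
    · intro s hs
      obtain ⟨n, rfl⟩ := AddSubgroup.mem_zmultiples_iff.1 ((hqS _).1 hs)
      exact ⟨n, rfl⟩
    · intro s hs
      obtain ⟨k, hk, rfl⟩ := hS' s ((hqS _).1 hs)
      exact hSoc k hk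
  · obtain ⟨_, x, hx, hx0, hxx, hgx⟩ := id hf
    refine ⟨Nat.prime_two, q x, by rw [hh₁', hx, g₂.map_zero], ?_, ?_, ?_⟩
    · intro h0
      obtain ⟨n, hn⟩ := AddSubgroup.mem_zmultiples_iff.1 ((hqS x).1 h0)
      have h1 := hfy4 n
      rw [hn, hx] at h1
      have h2 := hyinf _ h1.symm
      have h3 : n = 0 := by lia
      rw [h3, zero_zsmul] at hn
      exact hx0 hn.symm
    · rw [← q.map_nsmul, hxx, q.map_zero]
    · intro e he
      obtain ⟨b, rfl⟩ := q.surj e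
      rw [hh₁', hkg] at he
      obtain ⟨m, hm, hb⟩ := he
      obtain ⟨k, rfl⟩ := f.surj m
      have hj : f (-(4 • k) + b) = 0 := by rw [f.neg_add_mem, f.map_nsmul, hb]
      obtain ⟨n, hn⟩ := hgx _ hj
      refine ⟨n, ?_⟩
      rw [← q.map_zsmul, ← hn, q.map_add, q.map_neg, (hqS _).2 (hS k hm)]; simp

end Factors

section Lists

/-- factor of type `t` -/
def FT {B C : Type u} [SkewBrace B] [SkewBrace C] (f : Epi B C) (t : ℕ) : Prop :=
  (t = 0 ∧ Inf f) ∨ Pr f t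

/-- braces with an ideal chain of prescribed factor types -/
def SSL : List ℕ → ∀ (B : Type u) [SkewBrace B], Prop
  | [], B, _ => Subsingleton B
  | t :: l, B, _ => ∃ (C : Type u) (_ : SkewBrace C) (f : Epi B C), FT f t ∧ SSL l C

theorem FT.inf {B C : Type u} [SkewBrace B] [SkewBrace C] {f : Epi B C} (h : FT f 0) : Inf f := by
  rcases h with h | h
  · exact h.2
  · exact absurd h.1 (by norm_num)

theorem FT.pr {B C : Type u} [SkewBrace B] [SkewBrace C] {f : Epi B C} {p : ℕ} (h : FT f p)
    (hp : p ≠ 0) : Pr f p := by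
  rcases h with h | h
  · exact absurd h.1 hp
  · exact h

/-- list of zeros and twos -/
def ZT (l : List ℕ) : Prop := ∀ t ∈ l, t = 0 ∨ t = 2

theorem ZT.cons {t : ℕ} {l : List ℕ} (ht : t = 0 ∨ t = 2) (h : ZT l) : ZT (t :: l) := by
  intro s hs
  rcases List.mem_cons.1 hs with rfl | hs
  · exact ht
  · exact h s hs

/-- list of odd nonzero numbers -/
def OddL (l : List ℕ) : Prop := ∀ t ∈ l, t ≠ 0 ∧ t ≠ 2

theorem bubble (o : List ℕ) : ∀ (B : Type u) [SkewBrace B] (s : ℕ) (l : List ℕ),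
    (s = 0 ∨ s = 2) → OddL o → ZT l → SSL (s :: (o ++ l)) B →
    ∃ o' l', OddL o' ∧ ZT l' ∧ SSL (o' ++ l') B := by
  induction o with
  | nil =>
    intro B _ s l hs _ hl h
    exact ⟨[], s :: l, by intro t ht; simp at ht, hl.cons hs, h⟩
  | cons p o ih =>
    intro B _ s l hs ho hl h
    obtain ⟨C, iC, f, hf, D, iD, g, hg, hD⟩ := h
    have hp := ho p (by simp)
    have ho' : OddL o := fun t ht => ho t (by simp [ht])
    have hgp := hg.pr hp.1
    have step : ∀ (E : Type u) (_ : SkewBrace E) (q : Epi B E) (h : Epi E D), Pr q p → FT h s →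
        ∃ o' l', OddL o' ∧ ZT l' ∧ SSL (o' ++ l') B := by
      intro E iE q h hq hh
      obtain ⟨o', l', h1, h2, h3⟩ := ih E s l hs ho' hl ⟨D, iD, h, hh, hD⟩
      refine ⟨p :: o', l', ?_, h2, E, iE, q, Or.inr hq, h3⟩
      intro t ht
      rcases List.mem_cons.1 ht with rfl | ht
      · exact hp
      · exact h1 t ht
    rcases hs with rfl | rfl
    · rcases swap_inf_odd f g hf.inf hgp hp.2 with ⟨E, iE, q, h, hq, hh⟩ | ⟨h, hh⟩
      · exact step E iE q h hq (Or.inl ⟨rfl, hh⟩)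
      · exact ih B 0 l (Or.inl rfl) ho' hl ⟨D, iD, h, Or.inl ⟨rfl, hh⟩, hD⟩
    · obtain ⟨E, iE, q, h, hq, hh⟩ := swap_two_odd f g (hf.pr (by norm_num)) hgp hp.2
      exact step E iE q h hq (Or.inr hh)

theorem sortOdd (l : List ℕ) : ∀ (B : Type u) [SkewBrace B], SSL l B →
    ∃ o' l', OddL o' ∧ ZT l' ∧ SSL (o' ++ l') B := by
  induction l with
  | nil =>
    intro B _ h
    exact ⟨[], [], by intro t ht; simp at ht, by intro t ht; simp at ht, h⟩
  | cons s l ih =>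
    rintro B _ ⟨C, iC, f, hf, hC⟩
    obtain ⟨o', l', h1, h2, h3⟩ := ih C hC
    by_cases hs : s = 0 ∨ s = 2
    · exact bubble o' B s l' hs h1 h2 ⟨C, iC, f, hf, h3⟩
    · push Not at hs
      refine ⟨s :: o', l', ?_, h2, C, iC, f, hf, h3⟩
      intro t ht
      rcases List.mem_cons.1 ht with rfl | ht
      · exact hs
      · exact h1 t ht

theorem pullZero (l : List ℕ) : ∀ (B : Type u) [SkewBrace B], ZT l → 0 < l.count 0 → SSL l B →
    ∃ l', ZT l' ∧ l'.count 0 + 1 = l.count 0 ∧ SSL (0 :: l') B := by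
  induction l with
  | nil => intro B _ _ h; simp at h
  | cons s l ih =>
    intro B _ hl hc h
    have hl' : ZT l := fun t ht => hl t (by simp [ht])
    rcases hl s (by simp) with rfl | rfl
    · exact ⟨l, hl', by simp, h⟩
    · obtain ⟨C, iC, f, hf, hC⟩ := h
      have hcc : (2 :: l).count 0 = l.count 0 := by simp
      rw [hcc] at hc ⊢
      obtain ⟨l', h1, h2, D, iD, g, hg, hD⟩ := ih C hl' hc hC
      obtain ⟨E₁, E₂, E₃, i₁, i₂, i₃, h₀, g₁, g₂, g₃, k₀, k₁, k₂, k₃⟩ :=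
        swap_two_inf f g (hf.pr (by norm_num)) hg.inf
      refine ⟨2 :: 2 :: 2 :: l', ?_, ?_, E₁, i₁, h₀, Or.inl ⟨rfl, k₀⟩, E₂, i₂, g₁, Or.inr k₁,
        E₃, i₃, g₂, Or.inr k₂, D, iD, g₃, Or.inr k₃, hD⟩
      · exact ((h1.cons (Or.inr rfl)).cons (Or.inr rfl)).cons (Or.inr rfl)
      · simpa using h2

theorem card_twos (l : List ℕ) : ∀ (B : Type u) [SkewBrace B], ZT l → l.count 0 = 0 → SSL l B →
    ∃ k, Nat.card B = 2 ^ k := by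
  induction l with
  | nil =>
    intro B _ _ _ h
    have : Subsingleton B := h
    exact ⟨0, by rw [pow_zero, Nat.card_eq_one_iff_unique]; exact ⟨this, ⟨0⟩⟩⟩
  | cons s l ih =>
    intro B _ hl hc h
    have hl' : ZT l := fun t ht => hl t (by simp [ht])
    rcases hl s (by simp) with rfl | rfl
    · simp at hc
    · obtain ⟨C, iC, f, hf, hC⟩ := h
      obtain ⟨k, hk⟩ := ih C hl' (by simpa using hc) hC
      refine ⟨k + 1, ?_⟩
      have h1 := AddSubgroup.card_mul_index f.addHom.ker
      rw [AddSubgroup.index_ker, AddMonoidHom.range_eq_top.2 f.surj,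
        Nat.card_congr AddSubgroup.topEquiv.toEquiv, hk] at h1
      have h2 : Nat.card f.addHom.ker = 2 := (hf.pr (by norm_num)).card
      rw [← h1, h2, pow_succ']

/-- the zero ideal -/
def botIdeal (B : Type u) [SkewBrace B] : BraceIdeal B where
  carrier := {0}
  zero_mem := rfl
  add_mem := by rintro a b rfl rfl; simp
  neg_mem := by rintro a rfl; simp
  mul_mem := by rintro a b rfl rfl; rw [← one_eq_zero]; simp
  inv_mem := by rintro a rfl; rw [← one_eq_zero]; simp
  addConj_mem := by rintro b a rfl; simp
  mulConj_mem := by rintro b a rfl; rw [← one_eq_zero]; simp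
  lam_mem := by rintro b a rfl; simp [lam_zero]

/-- intersection of ideals -/
def infIdeal {B : Type u} [SkewBrace B] (I J : BraceIdeal B) : BraceIdeal B where
  carrier := I.carrier ∩ J.carrier
  zero_mem := ⟨I.zero_mem, J.zero_mem⟩
  add_mem := fun ha hb => ⟨I.add_mem ha.1 hb.1, J.add_mem ha.2 hb.2⟩
  neg_mem := fun ha => ⟨I.neg_mem ha.1, J.neg_mem ha.2⟩
  mul_mem := fun ha hb => ⟨I.mul_mem ha.1 hb.1, J.mul_mem ha.2 hb.2⟩
  inv_mem := fun ha => ⟨I.inv_mem ha.1, J.inv_mem ha.2⟩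
  addConj_mem := fun b _ ha => ⟨I.addConj_mem b ha.1, J.addConj_mem b ha.2⟩
  mulConj_mem := fun b _ ha => ⟨I.mulConj_mem b ha.1, J.mulConj_mem b ha.2⟩
  lam_mem := fun b _ ha => ⟨I.lam_mem b ha.1, J.lam_mem b ha.2⟩

/-- 2-power index -/
def TwoIdx {B : Type u} [SkewBrace B] (I : BraceIdeal B) : Prop :=
  ∃ k, I.toSubbrace.addSubgroup.index = 2 ^ k

theorem TwoIdx.comap {B C : Type u} [SkewBrace B] [SkewBrace C] (f : Epi B C) {I : BraceIdeal C}
    (h : TwoIdx I) : TwoIdx (f.comap I) := by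
  obtain ⟨k, hk⟩ := h
  refine ⟨k, ?_⟩
  rw [← hk, ← AddSubgroup.index_comap_of_surjective _ (f := f.addHom) f.surj]
  rfl

theorem TwoIdx.inf {B : Type u} [SkewBrace B] {I J : BraceIdeal B}
    (hI : TwoIdx I) (hJ : TwoIdx J) : TwoIdx (infIdeal I J) := by
  obtain ⟨k, hk⟩ := hI
  obtain ⟨m, hm⟩ := hJ
  have hn : I.toSubbrace.addSubgroup.Normal := ⟨fun a ha b => I.addConj_mem b ha⟩
  have h1 : (infIdeal I J).toSubbrace.addSubgroup =
      I.toSubbrace.addSubgroup ⊓ J.toSubbrace.addSubgroup := rfl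
  have h2 := AddSubgroup.relIndex_mul_index
    (inf_le_right : I.toSubbrace.addSubgroup ⊓ J.toSubbrace.addSubgroup ≤ _)
  rw [AddSubgroup.inf_relIndex_right] at h2
  have h3 := AddSubgroup.relIndex_dvd_index_of_normal I.toSubbrace.addSubgroup
    J.toSubbrace.addSubgroup
  rw [hk] at h3
  obtain ⟨r, _, hr⟩ := (Nat.dvd_prime_pow Nat.prime_two).1 h3
  refine ⟨r + m, ?_⟩
  rw [h1, ← h2, hr, hm, pow_add]

theorem TwoIdx.bot {B : Type u} [SkewBrace B] (h : ∃ k, Nat.card B = 2 ^ k) :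
    TwoIdx (botIdeal B) := by
  obtain ⟨k, hk⟩ := h
  refine ⟨k, ?_⟩
  have : (botIdeal B).toSubbrace.addSubgroup = ⊥ := rfl
  rw [this, AddSubgroup.index_bot, hk]

theorem lemmaA (n : ℕ) : ∀ (B : Type u) [SkewBrace B] (l : List ℕ), ZT l → l.count 0 = n →
    SSL l B → ∀ ε : B →* ℤˣ, ∃ I : BraceIdeal B, TwoIdx I ∧ ∀ b ∈ I.carrier, ε b = 1 := by
  induction n with
  | zero =>
    intro B _ l hl hc h ε
    refine ⟨botIdeal B, TwoIdx.bot (card_twos l B hl hc h), ?_⟩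
    rintro b rfl
    rw [← one_eq_zero, map_one]
  | succ n ih =>
    intro B _ l hl hc h ε
    obtain ⟨l', h1, h2, C, iC, f, hf, hC⟩ := pullZero l B hl (by lia) h
    obtain ⟨E, iE, q, g, hq, hg, hgq, hker⟩ := double_inf f hf.inf
    obtain ⟨_, _, _, _, hsoc⟩ := hf.inf
    have hle : q.mulHom.ker ≤ ε.ker := by
      intro b hb
      rw [MonoidHom.mem_ker, one_eq_zero] at hb
      obtain ⟨z, hz, rfl⟩ := (hker b).1 hb
      rw [MonoidHom.mem_ker, ← (hsoc z hz).pow, map_pow, Int.units_sq]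
    let ε' : E →* ℤˣ := q.mulHom.liftOfSurjective q.surj ⟨ε, hle⟩
    have hε' : ∀ b, ε' (q b) = ε b := fun b =>
      q.mulHom.liftOfRightInverse_comp_apply _ (Function.rightInverse_surjInv q.surj) ⟨ε, hle⟩ b
    obtain ⟨I, hI, hIε⟩ := ih E (2 :: l') (h1.cons (Or.inr rfl))
      (by have : (2 :: l').count 0 = l'.count 0 := by simp
          lia) ⟨C, iC, g, Or.inr hg, hC⟩ ε'
    refine ⟨q.comap I, hI.comap q, ?_⟩
    intro b hb
    rw [← hε']
    exact hIε _ hb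

theorem exists_sign {B C : Type u} [SkewBrace B] [SkewBrace C] (f : Epi B C) (hf : Inf f) :
    ∃ ε : B →* ℤˣ, ∀ b, ε b = 1 → ∀ z, f z = 0 → lam b z = z := by
  obtain ⟨x, hx, hxinf, hxgen, hsoc⟩ := hf
  choose m hm using fun b => hxgen _ (ker_lam f hx b)
  have huniq : ∀ a b : ℤ, a • x = b • x → a = b := by
    intro a b h
    have : (a - b) • x = 0 := by rw [sub_zsmul, h]; simp
    linarith [hxinf _ this]
  let φ : B →* ℤ :=
    { toFun := m
      map_one' := by
        apply huniq
        rw [← hm, lam_one, one_zsmul]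
      map_mul' := by
        intro a b
        apply huniq
        rw [← hm, lam_mul, hm b, lam_zsmul, hm a, ← mul_zsmul, mul_comm] }
  refine ⟨φ.toHomUnits, ?_⟩
  intro b hb z hz
  have h1 : m b = 1 := congrArg Units.val hb
  obtain ⟨n, rfl⟩ := hxgen z hz
  rw [lam_zsmul, hm, h1, one_zsmul]

theorem mainC (n : ℕ) : ∀ (B : Type u) [SkewBrace B] (l : List ℕ), ZT l → l.count 0 = n →
    SSL l B → ∃ I : BraceIdeal B, TwoIdx I ∧ IsBCentrallyNilpotent I := by
  induction n with
  | zero =>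
    intro B _ l hl hc h
    refine ⟨botIdeal B, TwoIdx.bot (card_twos l B hl hc h), 0, fun _ => botIdeal B, rfl, rfl, ?_, ?_⟩
    · intro j hj; lia
    · intro j hj; lia
  | succ n ih =>
    intro B _ l hl hc h
    obtain ⟨l', h1, h2, C, iC, f, hf, hC⟩ := pullZero l B hl (by lia) h
    obtain ⟨IC, hIC, r, J, hJ0, hJr, hJle, hJz⟩ := ih C l' h1 (by lia) hC
    obtain ⟨ε, hε⟩ := exists_sign f hf.inf
    obtain ⟨E, hE, hEε⟩ := lemmaA (n + 1) B l hl hc h ε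
    obtain ⟨_, _, _, _, hsoc⟩ := hf.inf
    refine ⟨infIdeal (f.comap IC) E, (hIC.comap f).inf hE, r + 1,
      fun i => Nat.casesOn i (botIdeal B) (fun i => infIdeal (f.comap (J i)) E), rfl, ?_, ?_, ?_⟩
    · change {b | f b ∈ (J r).carrier} ∩ E.carrier = {b | f b ∈ IC.carrier} ∩ E.carrier
      rw [hJr]
    · rintro (_ | j) hj
      · rintro b rfl
        exact (infIdeal (f.comap (J 0)) E).zero_mem
      · rintro b ⟨hb, hb'⟩
        exact ⟨hJle j (by lia) hb, hb'⟩
    · rintro (_ | j) hj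
      · rintro z ⟨hz, hzE⟩
        change f z ∈ (J 0).carrier at hz
        have hz0 : f z = 0 := by rw [hJ0] at hz; exact hz
        have hIC0 : f z ∈ IC.carrier := by rw [hz0]; exact IC.zero_mem
        refine ⟨⟨⟨hIC0, hzE⟩, ?_, ?_⟩, ?_⟩
        · intro y hy
          change -y + lam z y = 0
          rw [(hsoc z hz0 y).1]; simp
        · intro y hy
          change -(y + z) + (z + y) = 0
          rw [(hsoc z hz0 y).2]; simp
        · intro y hy
          change (y * z)⁻¹ * (z * y) = 0
          rw [← one_eq_zero, inv_mul_eq_one, (hsoc z hz0).mul_eq, mul_eq_add_lam,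
            hε y (hEε y hy.2) z hz0, (hsoc z hz0 y).2]
      · rintro z ⟨hz, hzE⟩
        obtain ⟨⟨k1, k2, k3⟩, k4⟩ := hJz j (by lia) (f z) hz
        refine ⟨⟨⟨k1, hzE⟩, ?_, ?_⟩, ?_⟩
        · rintro y ⟨hy, hyE⟩
          refine ⟨?_, E.add_mem (E.neg_mem hyE) (E.lam_mem _ hyE)⟩
          change f _ ∈ (J j).carrier
          rw [f.map_add, f.map_neg, f.map_lam]
          exact k2 _ hy
        · rintro y ⟨hy, hyE⟩
          refine ⟨?_, E.add_mem (E.neg_mem (E.add_mem hyE hzE)) (E.add_mem hzE hyE)⟩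
          change f _ ∈ (J j).carrier
          rw [f.map_add, f.map_neg, f.map_add, f.map_add]
          exact k3 _ hy
        · rintro y ⟨hy, hyE⟩
          refine ⟨?_, E.mul_mem (E.inv_mem (E.mul_mem hyE hzE)) (E.mul_mem hzE hyE)⟩
          change f _ ∈ (J j).carrier
          rw [f.map_mul, f.map_inv, f.map_mul, f.map_mul]
          exact k4 _ hy

theorem exists_SSL (B : Type u) [SkewBrace B] (hB : IsSupersoluble B) : ∃ l, SSL l B := by
  obtain ⟨n, I, hI0, hIn, hle, hfac⟩ := hB
  have key : ∀ m i, i + m = n → ∀ (C : Type u) [SkewBrace C] (f : Epi B C),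
      (∀ b, f b = 0 ↔ b ∈ (I i).carrier) → ∃ l, SSL l C := by
    intro m
    induction m with
    | zero =>
      intro i hi C _ f hf
      have hin : i = n := by lia
      subst hin
      refine ⟨[], ⟨fun a b => ?_⟩⟩
      obtain ⟨a, rfl⟩ := f.surj a
      obtain ⟨b, rfl⟩ := f.surj b
      rw [(hf a).2 (by rw [hIn]; trivial), (hf b).2 (by rw [hIn]; trivial)]
    | succ m ih =>
      intro i hi C _ f hf
      obtain ⟨D, iD, q, hq⟩ := exists_quot (I (i + 1))
      obtain ⟨g, hg⟩ := f.exists_lift q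
        (fun b hb => (hq b).2 (hle i (by lia) ((hf b).1 hb)))
      obtain ⟨l, hl⟩ := ih (i + 1) (by lia) D q hq
      have hgk : ∀ c, g c = 0 → ∃ b ∈ (I (i + 1)).carrier, f b = c := by
        intro c hc
        obtain ⟨b, rfl⟩ := f.surj c
        exact ⟨b, (hq b).1 (by rw [← hg, hc]), rfl⟩
      have hgen : ∀ x, (∀ y ∈ (I (i + 1)).carrier, ∃ n : ℤ, -(n • x) + y ∈ (I i).carrier) →
          ∀ c, g c = 0 → ∃ n : ℤ, c = n • f x := by
        intro x hx c hc
        obtain ⟨b, hb, rfl⟩ := hgk c hc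
        obtain ⟨n, hn⟩ := hx b hb
        refine ⟨n, ?_⟩
        rw [← hf, f.neg_add_mem] at hn
        rw [← hn, f.map_zsmul]
      rcases hfac i (by lia) with ⟨⟨x, hx, hx1, hx2⟩, hs⟩ | ⟨p, hp, x, hx, hx1, hx2, hx3⟩
      · refine ⟨0 :: l, D, iD, g, Or.inl ⟨rfl, f x, ?_, ?_, hgen x hx1, ?_⟩, hl⟩
        · rw [hg, hq]; exact hx
        · intro n hn
          apply hx2
          rw [← hf, f.map_zsmul, hn]
        · intro c hc b
          obtain ⟨z, hz, rfl⟩ := hgk c hc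
          obtain ⟨y, rfl⟩ := f.surj b
          obtain ⟨_, k1, k2⟩ := hs z hz
          have e1 := k1 y trivial
          have e2 := k2 y trivial
          rw [← hf, f.neg_add_mem] at e1 e2
          rw [← f.map_lam, ← f.map_add, ← f.map_add]
          exact ⟨e1.symm, e2.symm⟩
      · refine ⟨p :: l, D, iD, g, Or.inr ⟨hp, f x, ?_, ?_, ?_, hgen x hx3⟩, hl⟩
        · rw [hg, hq]; exact hx
        · rwa [Ne, hf]
        · rw [← f.map_nsmul, hf]; exact hx2
  exact key n 0 (by simp) B (Epi.refl B) (by intro b; rw [hI0]; rfl)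

end Lists

end SkewBrace

namespace SkewBrace

/-- Let `B` be a supersoluble brace such that `U_2^+(B) = {0}`, i.e. `(B,+)` has no
nonzero element of finite odd order. Then `B/Fit(B)` is finite of order a power
of `2`. -/
theorem quotient_fitting_two_power (B : Type*) [SkewBrace B] (hB : IsSupersoluble B)
    (h2 : {x : B | addOrderOf x ≠ 0 ∧
      ∀ q : ℕ, q.Prime → q ∣ addOrderOf x → 2 < q} = {0}) :
    ∃ k : ℕ, Nat.card (B ⧸ fitAdd B) = 2 ^ k := by
  obtain ⟨l₀, hl₀⟩ := exists_SSL B hB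
  obtain ⟨o, l, ho, hl, h⟩ := sortOdd l₀ B hl₀
  have ho' : o = [] := by
    cases o with
    | nil => rfl
    | cons p o =>
      exfalso
      obtain ⟨C, iC, f, hf, _⟩ := h
      have hp := ho p (by simp)
      obtain ⟨hpp, x, hx, hx0, hpx, _⟩ := hf.pr hp.1
      have hord : addOrderOf x = p := by
        haveI := Fact.mk hpp
        exact addOrderOf_eq_prime hpx hx0
      apply hx0
      have hmem : x ∈ ({0} : Set B) := by
        rw [← h2]
        refine ⟨by rw [hord]; exact hp.1, ?_⟩
        intro q hq hqd
        rw [hord, Nat.prime_dvd_prime_iff_eq hq hpp] at hqd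
        subst hqd
        exact lt_of_le_of_ne hq.two_le (Ne.symm hp.2)
      exact hmem
  subst ho'
  obtain ⟨I, ⟨k, hk⟩, hI⟩ := mainC _ B l hl rfl h
  have hle : I.toSubbrace.addSubgroup ≤ fitAdd B := by
    intro b hb
    apply AddSubgroup.subset_closure
    exact Set.mem_biUnion (x := I) hI hb
  have hd := AddSubgroup.index_dvd_of_le hle
  rw [hk] at hd
  obtain ⟨r, _, hr⟩ := (Nat.dvd_prime_pow Nat.prime_two).1 hd
  exact ⟨r, hr⟩

end SkewBrace
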